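/- arXiv:2604.26101 — 2 statements merged into one kernel-verified Lean document; each statement's English description precedes it below -/
import Mathlib

section
/- For every integer d ≥ 3, let N = |C(X_d)| and T = ∑_{σ ∈ C(X_d)} c(σ). Then, as rational numbers, T/N − 2·H_d = 2·(d − 2)·(3d³ − 14d² + 25d − 10) / (d·(d − 1)·(d⁴ − 6d³ + 19d² − 30d + 20)), and this quantity is strictly positive; in particular T > 2·H_d·N, i.e. the expected number of cycles of a uniformly random cycle-factor of X_d exceeds 2·H_d. -/
/-!
The generating polynomial `∑ σ, X ^ c(σ)` over the cycle-factors of `X_d` is computed exactly; its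
value and derivative at `1` are `N` and `T`.

Put `m = d - 2`. Deleting a vertex `b` from a permutation (replacing `u → b → w` by `u → w`) keeps
the number of cycles, unless `b` is a fixed point, in which case it drops by one. Delete in this
way all `2m` vertices of the classes `2` and `5`. What remains is a permutation `τ` of the four
vertices of the classes `0, 1, 3, 4`. The deletion may create arcs between the classes `1` and `3`
(skipping class `2`) or `4` and `0` (skipping class `5`) that are not arcs of `X_d`; call these
bad. Conversely, a new vertex of class `β ∈ {2, 5}` can be inserted as a fixed point or into any
arc whose two ends are both adjacent to class `β`, and a cycle-factor is obtained exactly when all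
bad arcs have been subdivided and there are no other non-arcs. If `τ` has `p` arcs into which class
`β` can be inserted, `q` of them bad, the number of ways to insert the `m` vertices of class `β`,
weighted by `X` to the number of new cycles, depends on `p` and `q` only; it is `fill m p q`, with
`fill (m + 1) p q = (X + p - q) * fill m (p + 1) q + q * fill m (p + 1) (q - 1)`.
The insertion step is `total_option`, based on `Equiv.Perm.decomposeOption`; iterating it gives
`gen_eq`. Only nine `τ` contribute (`smallStats`).

Finally `fill m p 0 = (X + p) ⋯ (X + p + m - 1)`, and `fill_sub` expresses `fill m p q` as an
iterated difference of these, so the values and derivatives at `1` follow (`fill_eval`,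
`count_and_sum`).
-/

/-- The number of cycles of a permutation of a finite type, where fixed
points count as cycles of length one. -/
def cycleCount {V : Type*} [Fintype V] [DecidableEq V] (σ : Equiv.Perm V) : ℕ :=
  σ.cycleType.card + (Finset.univ.filter fun x => σ x = x).card

/-- The finite set of cycle-factors of a digraph `G` on `V`. -/
def cycleFactors {V : Type*} [Fintype V] [DecidableEq V] (G : V → V → Prop) [DecidableRel G] :
    Finset (Equiv.Perm V) :=
  Finset.univ.filter fun σ => ∀ v, G v (σ v)

/-- A digraph is `d`-regular if every vertex has exactly `d` out-neighbours
and exactly `d` in-neighbours. -/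
def IsRegularDigraph {V : Type*} [Fintype V] (G : V → V → Prop) [DecidableRel G] (d : ℕ) : Prop :=
  ∀ v, (Finset.univ.filter fun w => G v w).card = d ∧
    (Finset.univ.filter fun w => G w v).card = d

/-- Sizes of the six classes of `X_d`: classes `2` and `5` have size `d - 2`,
the other four classes have size `1`. -/
def XdSize (d : ℕ) : ZMod 6 → ℕ := fun i => if i = 2 ∨ i = 5 then d - 2 else 1

/-- The vertex type of `X_d`: the disjoint union over `i ∈ ZMod 6` of classes
of sizes `1, 1, d-2, 1, 1, d-2`. -/
abbrev XdVert (d : ℕ) := Σ i : ZMod 6, Fin (XdSize d i)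

/-- The digraph `X_d`: an edge from `u` to `v` iff the class index of `v`
minus the class index of `u` lies in `{-1, 0, 1} ⊆ ZMod 6`. -/
def XdRel (d : ℕ) : XdVert d → XdVert d → Prop :=
  fun u v => v.1 - u.1 = -1 ∨ v.1 - u.1 = 0 ∨ v.1 - u.1 = 1

instance (d : ℕ) : DecidableRel (XdRel d) := fun u v => by
  unfold XdRel; infer_instance

/-- The harmonic number `H m = ∑_{j=1}^m 1/j`. -/
def harm (m : ℕ) : ℚ := ∑ j ∈ Finset.range m, (1 : ℚ) / (j + 1)

namespace CycleFactorCount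

open Equiv Equiv.Perm Finset Polynomial

/-! ### Cycle counts under insertion of a vertex -/

/-- A map that sends each step of `σ` into a single cycle of `τ` sends cycles into cycles. -/
theorem sameCycle_map {A B : Type*} [Finite A] {σ : Perm A} {τ : Perm B} (f : A → B)
    (hf : ∀ z, SameCycle τ (f z) (f (σ z))) {z w : A} (h : SameCycle σ z w) :
    SameCycle τ (f z) (f w) := by
  obtain ⟨n, rfl⟩ := h.exists_nat_pow_eq
  clear h
  induction n with
  | zero => exact SameCycle.refl _ _
  | succ n ih =>
    rw [pow_succ', Perm.mul_apply]
    exact ih.trans (hf _)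

/-- `cycleCount` is the number of orbits: a fixed point is recorded by itself, any other orbit by its
cycle factor. -/
theorem cycleCount_eq_card_quotient {A : Type*} [Fintype A] [DecidableEq A] (σ : Perm A) :
    cycleCount σ = Nat.card (Quotient (SameCycle.setoid σ)) := by
  classical
  let φ : A → A ⊕ Perm A := fun v => if σ v = v then Sum.inl v else Sum.inr (σ.cycleOf v)
  have hker : SameCycle.setoid σ = Setoid.ker φ := by
    ext u v
    change SameCycle σ u v ↔ φ u = φ v
    by_cases hu : σ u = u <;> by_cases hv : σ v = v
    · simp only [φ, hu, hv, if_true, Sum.inl.injEq]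
      exact ⟨fun h => h.eq_of_left hu, fun h => h ▸ SameCycle.rfl⟩
    · simp only [φ, hu, hv, if_true, if_false, reduceCtorEq, iff_false]
      exact fun h => hv (h.apply_eq_self_iff.1 hu)
    · simp only [φ, hu, hv, if_true, if_false, reduceCtorEq, iff_false]
      exact fun h => hu (h.apply_eq_self_iff.2 hv)
    · simp only [φ, hu, hv, if_false, Sum.inr.injEq]
      exact sameCycle_iff_cycleOf_eq_of_mem_support (mem_support.2 hu) (mem_support.2 hv)
  have hrange : Set.range φ =
      ((univ.filter fun x => σ x = x).disjSum σ.cycleFactorsFinset : Finset (A ⊕ Perm A)) := by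
    ext y
    simp only [Set.mem_range, mem_coe]
    constructor
    · rintro ⟨v, rfl⟩
      by_cases hv : σ v = v
      · simp [φ, hv]
      · simp only [φ, hv, if_false, inr_mem_disjSum]
        exact cycleOf_mem_cycleFactorsFinset_iff.2 (mem_support.2 hv)
    · rcases y with y | c
      · simp only [inl_mem_disjSum, mem_filter, mem_univ, true_and]
        exact fun h => ⟨y, by simp [φ, h]⟩
      · simp only [inr_mem_disjSum]
        intro hc
        obtain ⟨a, ha⟩ := (mem_cycleFactorsFinset_iff.1 hc).1.nonempty_support
        have ha' : σ a ≠ a := by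
          rw [← (mem_cycleFactorsFinset_iff.1 hc).2 a ha]; exact mem_support.1 ha
        refine ⟨a, ?_⟩
        simp only [φ, ha', if_false]
        rw [cycle_is_cycleOf ha hc]
  rw [hker, Nat.card_congr (Setoid.quotientKerEquivRange φ), hrange]
  simp [cycleCount, cycleType, add_comm]

theorem cycleCount_eq_of_maps {A B : Type*} [Fintype A] [DecidableEq A] [Fintype B] [DecidableEq B]
    {σ : Perm A} {τ : Perm B} (f : A → B) (g : B → A)
    (hf : ∀ z, SameCycle τ (f z) (f (σ z))) (hg : ∀ z, SameCycle σ (g z) (g (τ z)))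
    (hgf : ∀ a, SameCycle σ (g (f a)) a) (hfg : ∀ b, SameCycle τ (f (g b)) b) :
    cycleCount σ = cycleCount τ := by
  rw [cycleCount_eq_card_quotient, cycleCount_eq_card_quotient]
  refine Nat.card_congr
    { toFun := Quotient.map f fun _ _ h => sameCycle_map f hf h
      invFun := Quotient.map g fun _ _ h => sameCycle_map g hg h
      left_inv := ?_
      right_inv := ?_ }
  · rintro ⟨a⟩; exact Quotient.sound (hgf a)
  · rintro ⟨b⟩; exact Quotient.sound (hfg b)

theorem cycleCount_permCongr {A B : Type*} [Fintype A] [DecidableEq A] [Fintype B] [DecidableEq B]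
    (e : A ≃ B) (σ : Perm A) : cycleCount (e.permCongr σ) = cycleCount σ := by
  refine cycleCount_eq_of_maps e.symm e ?_ ?_ ?_ ?_
  · intro z; simpa using (SameCycle.refl σ _)
  · intro z; simpa using (SameCycle.refl (e.permCongr σ) (e z)).apply_right
  all_goals intro z; simp [SameCycle.refl]

/-- Adding a new fixed point adds one cycle. -/
theorem cycleCount_insert_none {A : Type*} [Fintype A] [DecidableEq A] (σ : Perm A) :
    cycleCount (decomposeOption.symm (none, σ)) = cycleCount σ + 1 := by
  rw [cycleCount_eq_card_quotient, cycleCount_eq_card_quotient, ← Finite.card_option]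
  set τ := decomposeOption.symm (none, σ) with hτ
  have h1 : ∀ z, τ z = z.map σ := fun z => decomposeOption_symm_of_none_apply σ z
  refine Nat.card_congr
    { toFun := Quotient.lift (Option.map (Quotient.mk (SameCycle.setoid σ))) ?_
      invFun := fun o => o.elim (Quotient.mk _ none)
        (Quotient.map some fun _ _ h => sameCycle_map some ?_ h)
      left_inv := ?_
      right_inv := ?_ }
  · intro a b h
    obtain ⟨n, rfl⟩ := SameCycle.exists_nat_pow_eq h
    clear h
    induction n with
    | zero => simp
    | succ n ih =>
      rw [ih, pow_succ', Perm.mul_apply, h1]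
      cases (τ ^ n) a with
      | none => rfl
      | some v =>
        simp only [Option.map_some, Option.some.injEq]
        exact Quotient.sound (SameCycle.refl σ v).apply_right
  · intro z
    have := (SameCycle.refl τ (some z)).apply_right
    rwa [h1] at this
  · rintro ⟨_ | a⟩ <;> rfl
  · rintro (_ | ⟨⟨a⟩⟩) <;> rfl

theorem insert_some_none {A : Type*} [DecidableEq A] (σ : Perm A) (a : A) :
    decomposeOption.symm (some a, σ) none = some a := by simp

/-- The permutation `decomposeOption.symm (some (σ u), σ)` is `σ` with the new point `none` inserted
into the arc `u → σ u`. -/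
theorem insert_some_some {A : Type*} [DecidableEq A] (σ : Perm A) (u v : A) :
    decomposeOption.symm (some (σ u), σ) (some v) = if v = u then none else some (σ v) := by
  split_ifs with h
  · subst h; simp
  · simp only [decomposeOption_symm_apply, Perm.mul_apply, optionCongr_apply, Option.map_some]
    exact swap_apply_of_ne_of_ne (by simp) (by simpa using h)

/-- Inserting a new point into an existing arc does not change the number of cycles: the inclusion
`some` and the map collapsing the new point onto its successor are inverse on orbits. -/
theorem cycleCount_insert_some {A : Type*} [Fintype A] [DecidableEq A] (σ : Perm A) (u : A) :
    cycleCount (decomposeOption.symm (some (σ u), σ)) = cycleCount σ := by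
  symm
  set τ := decomposeOption.symm (some (σ u), σ) with hτ
  have h0 : τ none = some (σ u) := insert_some_none σ _
  have h1 : ∀ v, τ (some v) = if v = u then none else some (σ v) := insert_some_some σ u
  refine cycleCount_eq_of_maps some (fun o => o.getD (σ u)) ?_ ?_ ?_ ?_
  · intro z
    by_cases hz : z = u
    · subst hz
      have : τ (τ (some z)) = some (σ z) := by rw [h1, if_pos rfl, h0]
      rw [← this]
      exact (SameCycle.refl τ _).apply_right.apply_right
    · have : τ (some z) = some (σ z) := by rw [h1, if_neg hz]
      rw [← this]
      exact (SameCycle.refl τ _).apply_right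
  · rintro (_ | z)
    · simp [h0, SameCycle.refl]
    · rw [h1]
      split_ifs with hz
      · subst hz; simp [SameCycle.refl]
      · simp [SameCycle.refl]
  · intro a; simp [SameCycle.refl]
  · rintro (_ | z)
    · simpa [h0] using (SameCycle.refl τ none).apply_left
    · simp [SameCycle.refl]

/-! ### Arcs between classes -/

/-- Adjacency of class indices in `X_d`. -/
def Adj (i j : ZMod 6) : Prop := j - i = -1 ∨ j - i = 0 ∨ j - i = 1

instance (i j : ZMod 6) : Decidable (Adj i j) := by unfold Adj; infer_instance

/-- A vertex of class `β` may be inserted into an arc from class `i` to class `j`. -/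
def Via (β i j : ZMod 6) : Prop := Adj i β ∧ Adj β j

instance (β i j : ZMod 6) : Decidable (Via β i j) := by unfold Via; infer_instance

/-- A pair of non-adjacent classes joined through class `β`: an arc of this kind must be subdivided
by vertices of class `β`. -/
def Bad (β i j : ZMod 6) : Prop := Via β i j ∧ ¬ Adj i j

instance (β i j : ZMod 6) : Decidable (Bad β i j) := by unfold Bad; infer_instance

/-- A pair of classes that no insertion of vertices of class `2` or `5` can repair. -/
def Forbidden (i j : ZMod 6) : Prop := ¬ Adj i j ∧ ¬ Bad 2 i j ∧ ¬ Bad 5 i j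

instance (i j : ZMod 6) : Decidable (Forbidden i j) := by unfold Forbidden; infer_instance

/-- The number of arcs `u → σ u` whose pair of labels satisfies `P`. -/
def arcCount {A : Type} [Fintype A] (P : ZMod 6 → ZMod 6 → Prop) [∀ i j, Decidable (P i j)]
    (κ : A → ZMod 6) (σ : Perm A) : ℕ := ∑ u, if P (κ u) (κ (σ u)) then 1 else 0

/-- The labelling of `Option A` extending `κ` by the label `β` at the new point. -/
def extLabel {A : Type} (β : ZMod 6) (κ : A → ZMod 6) : Option A → ZMod 6 := fun o => o.elim β κ

section insertion

variable {A : Type} [Fintype A] [DecidableEq A] (P : ZMod 6 → ZMod 6 → Prop)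
  [∀ i j, Decidable (P i j)] (β : ZMod 6) (κ : A → ZMod 6) (σ : Perm A)

theorem arcCount_insert_none :
    arcCount P (extLabel β κ) (decomposeOption.symm (none, σ)) =
      arcCount P κ σ + if P β β then 1 else 0 := by
  unfold arcCount
  rw [Fintype.sum_option, add_comm]
  simp only [decomposeOption_symm_of_none_apply]
  rfl

theorem arcCount_insert_some (u : A) :
    arcCount P (extLabel β κ) (decomposeOption.symm (some (σ u), σ)) +
        (if P (κ u) (κ (σ u)) then 1 else 0) =
      arcCount P κ σ + (if P (κ u) β then 1 else 0) + (if P β (κ (σ u)) then 1 else 0) := by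
  unfold arcCount
  rw [Fintype.sum_option, insert_some_none, ← Finset.add_sum_erase _ _ (mem_univ u),
    ← Finset.add_sum_erase univ (fun u => if P (κ u) (κ (σ u)) then 1 else 0) (mem_univ u)]
  have : ∑ v ∈ univ.erase u, (if P (extLabel β κ (some v))
        (extLabel β κ (decomposeOption.symm (some (σ u), σ) (some v))) then 1 else 0) =
      ∑ v ∈ univ.erase u, if P (κ v) (κ (σ v)) then 1 else 0 := by
    refine Finset.sum_congr rfl fun v hv => ?_
    rw [insert_some_some, if_neg (Finset.ne_of_mem_erase hv)]
    rfl
  rw [this, insert_some_some, if_pos rfl]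
  change (if P β (κ (σ u)) then 1 else 0) + ((if P (κ u) β then 1 else 0) + _) + _ = _
  omega

end insertion

/-- The weight of a permutation of labelled points: zero if it has a forbidden arc, and otherwise `f`
and `g` of the numbers of insertable and bad arcs for the classes `β` and `β + 3` respectively
(`β` and `β + 3` are the classes `2` and `5` in some order). -/
noncomputable def weight {A : Type} [Fintype A] (β : ZMod 6) (f g : ℕ → ℕ → ℚ[X]) (κ : A → ZMod 6)
    (σ : Perm A) : ℚ[X] :=
  if arcCount Forbidden κ σ = 0 then
    f (arcCount (Via β) κ σ) (arcCount (Bad β) κ σ) *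
      g (arcCount (Via (β + 3)) κ σ) (arcCount (Bad (β + 3)) κ σ)
  else 0

/-- The sum over all permutations of the weight times `X` to the number of cycles. -/
noncomputable def total {A : Type} [Fintype A] [DecidableEq A] (β : ZMod 6) (f g : ℕ → ℕ → ℚ[X])
    (κ : A → ZMod 6) : ℚ[X] :=
  ∑ σ : Perm A, X ^ cycleCount σ * weight β f g κ σ

/-- The effect on the weight function of inserting one vertex: as a fixed point (`X`), into one of
the `p - q` insertable arcs that are not bad, or into one of the `q` bad arcs. -/
noncomputable def step (f : ℕ → ℕ → ℚ[X]) (p q : ℕ) : ℚ[X] :=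
  (X + (p : ℚ[X]) - (q : ℚ[X])) * f (p + 1) q + (q : ℚ[X]) * f (p + 1) (q - 1)

theorem weight_insert_none {A : Type} [Fintype A] [DecidableEq A] {β : ZMod 6}
    (hβ : β = 2 ∨ β = 5) (f g : ℕ → ℕ → ℚ[X]) (κ : A → ZMod 6) (σ : Perm A) :
    weight β f g (extLabel β κ) (decomposeOption.symm (none, σ)) =
      weight β (fun p q => f (p + 1) q) g κ σ := by
  unfold weight
  simp only [arcCount_insert_none]
  have h1 : ∀ β : ZMod 6, β = 2 ∨ β = 5 → Via β β β ∧ ¬ Bad β β β ∧ ¬ Forbidden β β ∧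
    ¬ Via (β + 3) β β ∧ ¬ Bad (β + 3) β β := by decide
  obtain ⟨a, b, c, d, e⟩ := h1 β hβ
  simp only [if_pos a, if_neg b, if_neg c, if_neg d, if_neg e, add_zero]

/-- Inserting a vertex of class `β` into the arc `u → σ u` gives weight zero unless the arc admits it;
otherwise the number of insertable arcs grows by one, and a bad arc is repaired if `u → σ u` was
bad. -/
theorem weight_insert_some {A : Type} [Fintype A] [DecidableEq A] {β : ZMod 6}
    (hβ : β = 2 ∨ β = 5) (f g : ℕ → ℕ → ℚ[X]) (κ : A → ZMod 6) (σ : Perm A) (u : A) :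
    weight β f g (extLabel β κ) (decomposeOption.symm (some (σ u), σ)) =
      (if Bad β (κ u) (κ (σ u)) then 1 else 0) * weight β (fun p q => f (p + 1) (q - 1)) g κ σ +
      ((if Via β (κ u) (κ (σ u)) then 1 else 0) - (if Bad β (κ u) (κ (σ u)) then 1 else 0)) *
        weight β (fun p q => f (p + 1) q) g κ σ := by
  have hF := arcCount_insert_some Forbidden β κ σ u
  have hF' : (if Forbidden (κ u) (κ (σ u)) then 1 else 0) ≤ arcCount Forbidden κ σ :=
    Finset.single_le_sum (f := fun u => if Forbidden (κ u) (κ (σ u)) then 1 else 0)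
      (fun _ _ => Nat.zero_le _) (mem_univ u)
  have hV := arcCount_insert_some (Via β) β κ σ u
  have hB := arcCount_insert_some (Bad β) β κ σ u
  have hV' := arcCount_insert_some (Via (β + 3)) β κ σ u
  have hB' := arcCount_insert_some (Bad (β + 3)) β κ σ u
  unfold weight
  generalize arcCount Forbidden (extLabel β κ) _ = nF at *
  generalize arcCount (Via β) (extLabel β κ) _ = nV at *
  generalize arcCount (Bad β) (extLabel β κ) _ = nB at *
  generalize arcCount (Via (β + 3)) (extLabel β κ) _ = nV' at *
  generalize arcCount (Bad (β + 3)) (extLabel β κ) _ = nB' at *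
  generalize arcCount Forbidden κ σ = mF at *
  generalize arcCount (Via β) κ σ = mV at *
  generalize arcCount (Bad β) κ σ = mB at *
  generalize arcCount (Via (β + 3)) κ σ = mV' at *
  generalize arcCount (Bad (β + 3)) κ σ = mB' at *
  generalize κ u = i at *
  generalize κ (σ u) = j at *
  by_cases h : Via β i j
  · have h1 : ∀ β i j : ZMod 6, β = 2 ∨ β = 5 → Via β i j →
      Via β i β ∧ Via β β j ∧ ¬ Bad β i β ∧ ¬ Bad β β j ∧ ¬ Forbidden i j ∧
      ¬ Forbidden i β ∧ ¬ Forbidden β j ∧ ¬ Via (β + 3) i j ∧ ¬ Via (β + 3) i β ∧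
      ¬ Via (β + 3) β j ∧ ¬ Bad (β + 3) i j ∧ ¬ Bad (β + 3) i β ∧ ¬ Bad (β + 3) β j := by
      decide
    obtain ⟨a1, a2, a3, a4, a5, a6, a7, a8, a9, b1, b2, b3, b4⟩ := h1 β i j hβ h
    simp only [if_pos h, if_pos a1, if_pos a2, if_neg a3, if_neg a4, if_neg a5, if_neg a6,
      if_neg a7, if_neg a8, if_neg a9, if_neg b1, if_neg b2, if_neg b3, if_neg b4,
      add_zero] at hF hV hB hV' hB' ⊢
    obtain rfl : nV = mV + 1 := by omega
    subst hF hV' hB'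
    by_cases hb : Bad β i j
    · simp only [if_pos hb] at hB ⊢
      obtain rfl : nB = mB - 1 := by omega
      ring
    · simp only [if_neg hb, add_zero] at hB ⊢
      subst hB; ring
  · have h1 : ∀ β i j : ZMod 6, β = 2 ∨ β = 5 → ¬ Via β i j →
      ¬ Bad β i j ∧ (Forbidden i β ∨ Forbidden β j) := by decide
    obtain ⟨a1, a2⟩ := h1 β i j hβ h
    have : nF ≠ 0 := by
      rcases a2 with a2 | a2
      · rw [if_pos a2] at hF; omega
      · rw [if_pos a2] at hF; omega
    simp only [if_neg this, if_neg h, if_neg a1]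
    ring

/-! ### Removing the classes `2` and `5` -/

theorem weight_step {A : Type} [Fintype A] (β : ZMod 6) (f g : ℕ → ℕ → ℚ[X])
    (κ : A → ZMod 6) (σ : Perm A) :
    weight β (step f) g κ σ =
      (X + (arcCount (Via β) κ σ : ℚ[X]) - (arcCount (Bad β) κ σ : ℚ[X])) *
        weight β (fun p q => f (p + 1) q) g κ σ +
      (arcCount (Bad β) κ σ : ℚ[X]) * weight β (fun p q => f (p + 1) (q - 1)) g κ σ := by
  unfold weight step
  split_ifs <;> ring

/-- The insertion step: a point of class `β` is removed at the cost of one `step`. -/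
theorem total_option {A : Type} [Fintype A] [DecidableEq A] {β : ZMod 6}
    (hβ : β = 2 ∨ β = 5) (f g : ℕ → ℕ → ℚ[X]) (κ : A → ZMod 6) :
    total β f g (extLabel β κ) = total β (step f) g κ := by
  unfold total
  rw [← Equiv.sum_comp decomposeOption.symm, Fintype.sum_prod_type_right]
  refine Finset.sum_congr rfl fun σ _ => ?_
  rw [Fintype.sum_option, ← Equiv.sum_comp σ]
  simp only [cycleCount_insert_none, cycleCount_insert_some, weight_insert_none hβ,
    weight_insert_some hβ]
  rw [← Finset.mul_sum, Finset.sum_add_distrib, ← Finset.sum_mul, ← Finset.sum_mul,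
    Finset.sum_sub_distrib, weight_step]
  unfold arcCount
  push_cast
  ring

/-- `total` is invariant under label-preserving bijections. -/
theorem total_congr {A B : Type} [Fintype A] [DecidableEq A] [Fintype B] [DecidableEq B]
    (β : ZMod 6) (f g : ℕ → ℕ → ℚ[X]) (κ : A → ZMod 6) (κ' : B → ZMod 6) (e : A ≃ B)
    (he : ∀ a, κ' (e a) = κ a) : total β f g κ = total β f g κ' := by
  unfold total
  rw [← Equiv.sum_comp e.permCongr]
  refine Finset.sum_congr rfl fun σ _ => ?_
  have h : ∀ (P : ZMod 6 → ZMod 6 → Prop) [∀ i j, Decidable (P i j)],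
      arcCount P κ' (e.permCongr σ) = arcCount P κ σ := by
    intro P _
    unfold arcCount
    rw [← Equiv.sum_comp e]
    simp [he]
  rw [cycleCount_permCongr]
  unfold weight
  simp only [h]

/-- `fill m p q` is the generating polynomial, by number of new cycles, of the ways to insert `m`
vertices one after the other when `p` arcs are insertable and `q` of these are bad and must be
subdivided. -/
noncomputable def fill : ℕ → ℕ → ℕ → ℚ[X]
  | 0 => fun _ q => if q = 0 then 1 else 0
  | m + 1 => step (fill m)

theorem total_sum {A : Type} [Fintype A] [DecidableEq A] {β : ZMod 6}
    (hβ : β = 2 ∨ β = 5) (k m : ℕ) (g : ℕ → ℕ → ℚ[X]) (κ : A → ZMod 6) :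
    total β (fill k) g (Sum.elim (fun _ : Fin m => β) κ) = total β (fill (k + m)) g κ := by
  induction m generalizing k with
  | zero =>
    exact (total_congr _ _ _ _ _ (Equiv.emptySum (Fin 0) A).symm fun a => rfl).symm
  | succ m ih =>
    let e : Fin (m + 1) ⊕ A ≃ Option (Fin m ⊕ A) :=
      { toFun := Sum.elim (Fin.cases none fun i => some (Sum.inl i)) fun a => some (Sum.inr a)
        invFun := fun o => o.elim (Sum.inl 0) (Sum.map Fin.succ id)
        left_inv := by
          rintro (i | a)
          · induction i using Fin.cases <;> rfl
          · rfl
        right_inv := by rintro (_ | i | a) <;> rfl }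
    rw [total_congr β (fill k) g _ (extLabel β (Sum.elim (fun _ : Fin m => β) κ)) e,
      total_option hβ, ← Nat.succ_add_eq_add_succ]
    · exact ih (k + 1)
    · rintro (i | a)
      · induction i using Fin.cases <;> rfl
      · rfl

theorem total_swap {A : Type} [Fintype A] [DecidableEq A]
    (f g : ℕ → ℕ → ℚ[X]) (κ : A → ZMod 6) : total 2 f g κ = total 5 g f κ := by
  unfold total weight
  have h1 : (2 : ZMod 6) + 3 = 5 := by decide
  have h2 : (5 : ZMod 6) + 3 = 2 := by decide
  rw [h1, h2]
  refine Finset.sum_congr rfl fun σ _ => ?_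
  split_ifs <;> ring

/-- Before any deletion the weight is the indicator of cycle-factors: there are no forbidden and no
bad arcs. -/
theorem sum_cycleFactors (d : ℕ) :
    ∑ σ ∈ _root_.cycleFactors (XdRel d), (X : ℚ[X]) ^ cycleCount σ =
      total 2 (fill 0) (fill 0) (Sigma.fst : XdVert d → ZMod 6) := by
  unfold _root_.cycleFactors total
  rw [Finset.sum_filter]
  refine Finset.sum_congr rfl fun σ _ => ?_
  unfold weight
  have h1 : ∀ i j : ZMod 6, Adj i j ↔ ¬ Forbidden i j ∧ ¬ Bad 2 i j ∧ ¬ Bad (2 + 3) i j := by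
    decide
  have h0 : ∀ (P : ZMod 6 → ZMod 6 → Prop) [∀ i j, Decidable (P i j)],
      arcCount P Sigma.fst σ = 0 ↔ ∀ u, ¬ P u.1 (σ u).1 := by
    intro P _
    simp only [arcCount, Finset.sum_eq_zero_iff, mem_univ, true_imp_iff]
    simp
  have h2 : (∀ v, XdRel d v (σ v)) ↔ arcCount Forbidden Sigma.fst σ = 0 ∧
      arcCount (Bad 2) Sigma.fst σ = 0 ∧ arcCount (Bad (2 + 3)) Sigma.fst σ = 0 := by
    rw [h0, h0, h0, ← forall_and, ← forall_and]
    exact forall_congr' fun u => h1 _ _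
  simp only [h2, fill]
  split_ifs <;> simp_all

/-- The class indices of the four vertices that remain after deleting the classes `2` and `5`. -/
def smallLabel : Fin 4 → ZMod 6 := ![0, 1, 3, 4]

/-- The vertices of `X_d`, with their classes, are `d - 2` points of class `2`, `d - 2` points of
class `5` and the four remaining ones. -/
theorem exists_labelEquiv (d : ℕ) : ∃ e : XdVert d ≃ Fin (d - 2) ⊕ (Fin (d - 2) ⊕ Fin 4),
    ∀ a, Sum.elim (fun _ => (2 : ZMod 6)) (Sum.elim (fun _ => (5 : ZMod 6)) smallLabel) (e a) =
      a.1 := by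
  classical
  have key : ∀ c : ZMod 6, Nonempty ({a : XdVert d // a.1 = c} ≃
      {b : Fin (d - 2) ⊕ (Fin (d - 2) ⊕ Fin 4) // Sum.elim (fun _ => (2 : ZMod 6))
        (Sum.elim (fun _ => (5 : ZMod 6)) smallLabel) b = c}) := by
    intro c
    refine Fintype.card_eq.1 ?_
    rw [Fintype.card_congr (Equiv.sigmaSubtype c), Fintype.card_fin, Fintype.card_subtype,
      Finset.card_filter, Fintype.sum_sum_type, Fintype.sum_sum_type]
    simp only [Sum.elim_inl, Sum.elim_inr, Fin.sum_univ_four, XdSize, smallLabel]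
    have hc : ∀ c : ZMod 6, c = 0 ∨ c = 1 ∨ c = 2 ∨ c = 3 ∨ c = 4 ∨ c = 5 := by decide
    rcases hc c with rfl | rfl | rfl | rfl | rfl | rfl <;> simp +decide
  exact ⟨Equiv.ofFiberEquiv fun c => (key c).some, fun a => Equiv.ofFiberEquiv_map _ a⟩

/-! ### Evaluation -/

/-- The nine permutations of the four remaining vertices without forbidden arcs, listed by number of
cycles and the numbers of insertable and bad arcs for the classes `2` and `5`. -/
theorem smallStats :
    ((univ.filter fun σ : Perm (Fin 4) => arcCount Forbidden smallLabel σ = 0).val.map fun σ =>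
      (cycleCount σ, arcCount (Via 2) smallLabel σ, arcCount (Bad 2) smallLabel σ,
        arcCount (Via (2 + 3)) smallLabel σ, arcCount (Bad (2 + 3)) smallLabel σ)) =
    {(4, 2, 0, 2, 0), (3, 1, 0, 1, 0), (3, 1, 0, 1, 0), (3, 2, 2, 2, 0), (3, 2, 0, 2, 2),
      (2, 0, 0, 0, 0), (2, 2, 2, 2, 2), (1, 1, 1, 1, 1), (1, 1, 1, 1, 1)} := by
  decide +kernel

theorem total_small (f g : ℕ → ℕ → ℚ[X]) :
    total 2 f g smallLabel =
      X ^ 4 * (f 2 0 * g 2 0) + 2 * X ^ 3 * (f 1 0 * g 1 0) + X ^ 3 * (f 2 2 * g 2 0) +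
        X ^ 3 * (f 2 0 * g 2 2) + X ^ 2 * (f 0 0 * g 0 0) + X ^ 2 * (f 2 2 * g 2 2) +
        2 * X * (f 1 1 * g 1 1) := by
  have h := congrArg (fun s => (s.map fun t : ℕ × ℕ × ℕ × ℕ × ℕ =>
    (X : ℚ[X]) ^ t.1 * (f t.2.1 t.2.2.1 * g t.2.2.2.1 t.2.2.2.2)).sum) smallStats
  simp only [Multiset.map_map, Function.comp_def] at h
  unfold total weight
  simp only [mul_ite, mul_zero]
  rw [← Finset.sum_filter]
  refine h.trans ?_
  simp only [Multiset.insert_eq_cons, Multiset.map_cons, Multiset.sum_cons, Multiset.map_singleton,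
    Multiset.sum_singleton]
  ring

/-- Inclusion-exclusion: ways in which a given arc gets subdivided are all ways minus those that
never use the arc. -/
theorem fill_sub (m p q : ℕ) : fill m (p + 1) (q + 1) = fill m (p + 1) q - fill m p q := by
  induction m generalizing p q with
  | zero => simp [fill]
  | succ m ih =>
    have h1 := ih (p + 1) q
    simp only [fill, step, h1, Nat.add_sub_cancel]
    rcases q with _ | q
    · push_cast; ring
    · have h2 := ih (p + 1) q
      simp only [Nat.add_sub_cancel, h2]
      push_cast; ring

theorem harm_succ (n : ℕ) : harm (n + 1) = harm n + 1 / ((n : ℚ) + 1) := by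
  simp [harm, Finset.sum_range_succ]

/-- `fill m p 0` is the rising factorial of `X + p`, given here by its value and derivative at `1`. -/
theorem fill_eval (m p : ℕ) :
    (fill m p 0).eval 1 = ((m + p).factorial : ℚ) / p.factorial ∧
    (derivative (fill m p 0)).eval 1 =
      ((m + p).factorial : ℚ) / p.factorial * (harm (m + p) - harm p) := by
  induction m generalizing p with
  | zero =>
    have : (p.factorial : ℚ) ≠ 0 := by exact_mod_cast p.factorial_ne_zero
    simp [fill, this]
  | succ m ih =>
    obtain ⟨h1, h2⟩ := ih (p + 1)
    have hp : (p.factorial : ℚ) ≠ 0 := by exact_mod_cast p.factorial_ne_zero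
    have hp1 : (p : ℚ) + 1 ≠ 0 := by positivity
    have e : m + 1 + p = m + (p + 1) := by ring
    rw [e]
    simp only [fill, step, Nat.cast_zero, zero_mul, add_zero, sub_zero, eval_mul, eval_add, eval_X,
      derivative_mul, derivative_add, derivative_X, derivative_natCast, eval_natCast, eval_one, h1,
      h2, harm_succ p, Nat.factorial_succ p, Nat.cast_mul, Nat.cast_add, Nat.cast_one]
    constructor
    · field_simp; ring
    · field_simp; ring

theorem gen_eq (d : ℕ) :
    ∑ σ ∈ _root_.cycleFactors (XdRel d), (X : ℚ[X]) ^ cycleCount σ =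
      total 2 (fill (d - 2)) (fill (d - 2)) smallLabel := by
  obtain ⟨e, he⟩ := exists_labelEquiv d
  rw [sum_cycleFactors, total_congr _ _ _ _ _ e he, total_sum (Or.inl rfl), total_swap,
    total_sum (Or.inr rfl), ← total_swap, zero_add]

/-- `N` and `T` in terms of `m = d - 2`; the polynomial in the first line is
`d⁴ - 6d³ + 19d² - 30d + 20`, and the cubic is `3d³ - 14d² + 25d - 10`. -/
theorem count_and_sum (m : ℕ) :
    ((_root_.cycleFactors (XdRel (m + 2))).card : ℚ) = (m.factorial : ℚ) ^ 2 *
      ((m : ℚ) ^ 4 + 2 * (m : ℚ) ^ 3 + 7 * (m : ℚ) ^ 2 + 6 * (m : ℚ) + 4) ∧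
    ∑ σ ∈ _root_.cycleFactors (XdRel (m + 2)), (cycleCount σ : ℚ) =
      (m.factorial : ℚ) ^ 2 *
        (2 * harm (m + 2) *
            ((m : ℚ) ^ 4 + 2 * (m : ℚ) ^ 3 + 7 * (m : ℚ) ^ 2 + 6 * (m : ℚ) + 4) +
          2 * (m : ℚ) * (3 * (m : ℚ) ^ 3 + 4 * (m : ℚ) ^ 2 + 5 * (m : ℚ) + 8) /
            (((m : ℚ) + 2) * ((m : ℚ) + 1))) := by
  have h := gen_eq (m + 2)
  rw [total_small, Nat.add_sub_cancel, fill_sub m 1 1, fill_sub m 1 0, fill_sub m 0 0] at h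
  -- Evaluating `∑ X ^ c(σ)` at `1` counts; evaluating its derivative at `1` sums the `c(σ)`.
  have hN := congrArg (eval 1) h
  have hT := congrArg (fun P => eval 1 (derivative P)) h
  obtain ⟨a0, b0⟩ := fill_eval m 0
  obtain ⟨a1, b1⟩ := fill_eval m 1
  obtain ⟨a2, b2⟩ := fill_eval m 2
  simp [eval_finsetSum, derivative_X_pow, a0, a1, a2, b0, b1, b2] at hN hT
  have hm1 : (m : ℚ) + 1 ≠ 0 := by positivity
  have hm2 : (m : ℚ) + 2 ≠ 0 := by positivity
  have hs1 : harm (m + 1) = harm m + 1 / ((m : ℚ) + 1) := harm_succ m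
  have hs2 : harm (m + 2) = harm m + 1 / ((m : ℚ) + 1) + 1 / ((m : ℚ) + 2) := by
    rw [harm_succ (m + 1), hs1]
    push_cast
    ring
  have hh : harm 0 = 0 ∧ harm 1 = 1 ∧ harm 2 = 3 / 2 := by
    refine ⟨?_, ?_, ?_⟩ <;> norm_num [harm, Finset.sum_range_succ]
  have hf1 : ((m + 1).factorial : ℚ) = (m + 1) * m.factorial := by
    rw [Nat.factorial_succ]; push_cast; ring
  have hf2 : ((m + 2).factorial : ℚ) = (m + 2) * ((m + 1) * m.factorial) := by
    rw [Nat.factorial_succ, Nat.cast_mul, hf1]; push_cast; ring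
  rw [hN, hT]
  simp only [hs1, hs2, hh.1, hh.2.1, hh.2.2, hf1, hf2]
  constructor
  · field_simp
    ring
  · field_simp
    ring

end CycleFactorCount

theorem stmt_13 (d : ℕ) (hd : 3 ≤ d) :
    ((∑ σ ∈ cycleFactors (XdRel d), (cycleCount σ : ℚ)) /
          ((cycleFactors (XdRel d)).card : ℚ) - 2 * harm d =
        2 * ((d : ℚ) - 2) * (3 * (d : ℚ) ^ 3 - 14 * (d : ℚ) ^ 2 + 25 * (d : ℚ) - 10) /
          ((d : ℚ) * ((d : ℚ) - 1) *
            ((d : ℚ) ^ 4 - 6 * (d : ℚ) ^ 3 + 19 * (d : ℚ) ^ 2 - 30 * (d : ℚ) + 20))) ∧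
      (0 : ℚ) <
        2 * ((d : ℚ) - 2) * (3 * (d : ℚ) ^ 3 - 14 * (d : ℚ) ^ 2 + 25 * (d : ℚ) - 10) /
          ((d : ℚ) * ((d : ℚ) - 1) *
            ((d : ℚ) ^ 4 - 6 * (d : ℚ) ^ 3 + 19 * (d : ℚ) ^ 2 - 30 * (d : ℚ) + 20)) ∧
      2 * harm d * ((cycleFactors (XdRel d)).card : ℚ) <
        ∑ σ ∈ cycleFactors (XdRel d), (cycleCount σ : ℚ) := by
  obtain ⟨m, rfl⟩ : ∃ m, d = m + 2 := ⟨d - 2, by omega⟩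
  have hm : (1 : ℚ) ≤ m := by exact_mod_cast (by omega : 1 ≤ m)
  obtain ⟨hN, hT⟩ := CycleFactorCount.count_and_sum m
  have hpos : (0 : ℚ) < (m : ℚ) ^ 4 + 2 * (m : ℚ) ^ 3 + 7 * (m : ℚ) ^ 2 + 6 * (m : ℚ) + 4 := by
    positivity
  have hfac : (0 : ℚ) < (m.factorial : ℚ) ^ 2 := by positivity
  have hrhs : 2 * (((m + 2 : ℕ) : ℚ) - 2) * (3 * ((m + 2 : ℕ) : ℚ) ^ 3 -
        14 * ((m + 2 : ℕ) : ℚ) ^ 2 + 25 * ((m + 2 : ℕ) : ℚ) - 10) /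
        (((m + 2 : ℕ) : ℚ) * (((m + 2 : ℕ) : ℚ) - 1) * (((m + 2 : ℕ) : ℚ) ^ 4 -
          6 * ((m + 2 : ℕ) : ℚ) ^ 3 + 19 * ((m + 2 : ℕ) : ℚ) ^ 2 - 30 * ((m + 2 : ℕ) : ℚ) + 20)) =
      2 * (m : ℚ) * (3 * (m : ℚ) ^ 3 + 4 * (m : ℚ) ^ 2 + 5 * (m : ℚ) + 8) /
        (((m : ℚ) + 2) * ((m : ℚ) + 1)) /
        ((m : ℚ) ^ 4 + 2 * (m : ℚ) ^ 3 + 7 * (m : ℚ) ^ 2 + 6 * (m : ℚ) + 4) := by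
    rw [div_div]
    push_cast
    congr 1 <;> ring
  rw [hrhs, hN, hT]
  have hc : 0 < 2 * (m : ℚ) * (3 * (m : ℚ) ^ 3 + 4 * (m : ℚ) ^ 2 + 5 * (m : ℚ) + 8) /
        (((m : ℚ) + 2) * ((m : ℚ) + 1)) := by positivity
  generalize 2 * (m : ℚ) * (3 * (m : ℚ) ^ 3 + 4 * (m : ℚ) ^ 2 + 5 * (m : ℚ) + 8) /
        (((m : ℚ) + 2) * ((m : ℚ) + 1)) = c at hc ⊢
  generalize (m : ℚ) ^ 4 + 2 * (m : ℚ) ^ 3 + 7 * (m : ℚ) ^ 2 + 6 * (m : ℚ) + 4 = n at hpos ⊢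
  refine ⟨?_, div_pos hc hpos, ?_⟩
  · field_simp
    ring
  · nlinarith [mul_pos hfac hc]
end

section
/- For every integer d ≥ 3 and every integer k ≥ 2, let G_{k,d} be the disjoint union of the digraph X_d with k − 2 copies of the complete looped digraph K_d° on d vertices. Then G_{k,d} is a d-regular digraph on k·d vertices, C(G_{k,d}) is nonempty, and ∑_{σ ∈ C(G_{k,d})} c(σ) > k·H_d·|C(G_{k,d})| as rational numbers; that is, the expected number of cycles of a uniformly random cycle-factor of G_{k,d} exceeds k·H_d, the expected cycle count of the disjoint union of k copies of K_d°. -/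
/-- The disjoint union of two digraphs: an edge between two vertices iff both
lie in the same summand and the corresponding edge is present there. -/
def sumRel {V₁ V₂ : Type*} (G₁ : V₁ → V₁ → Prop) (G₂ : V₂ → V₂ → Prop) :
    V₁ ⊕ V₂ → V₁ ⊕ V₂ → Prop
  | Sum.inl a, Sum.inl b => G₁ a b
  | Sum.inr a, Sum.inr b => G₂ a b
  | _, _ => False

instance {V₁ V₂ : Type*} (G₁ : V₁ → V₁ → Prop) (G₂ : V₂ → V₂ → Prop)
    [DecidableRel G₁] [DecidableRel G₂] : DecidableRel (sumRel G₁ G₂) := fun x y =>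
  match x, y with
  | Sum.inl a, Sum.inl b => inferInstanceAs (Decidable (G₁ a b))
  | Sum.inr a, Sum.inr b => inferInstanceAs (Decidable (G₂ a b))
  | Sum.inl _, Sum.inr _ => inferInstanceAs (Decidable False)
  | Sum.inr _, Sum.inl _ => inferInstanceAs (Decidable False)

/-- The vertex type of `G_{k,d}`: the vertices of `X_d` together with `k - 2`
disjoint copies of a `d`-element vertex set. -/
abbrev GkdVert (k d : ℕ) := XdVert d ⊕ (Fin (k - 2) × Fin d)

/-- The digraph `G_{k,d}`: the disjoint union of `X_d` with `k - 2` copies of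
the complete looped digraph `K_d°` (two vertices of the second summand are
joined iff they lie in the same copy). -/
def GkdRel (k d : ℕ) : GkdVert k d → GkdVert k d → Prop :=
  sumRel (XdRel d) (fun a b : Fin (k - 2) × Fin d => a.1 = b.1)

instance (k d : ℕ) : DecidableRel (GkdRel k d) := fun x y => by
  unfold GkdRel; infer_instance

open Polynomial Equiv

/-! ### Counting cycles -/

theorem sameCycle_map {V W : Type*} {σ : Perm V} {τ : Perm W} (f : V → W)
    (h : ∀ z, τ.SameCycle (f z) (f (σ z))) {a b : V} (hab : σ.SameCycle a b) :
    τ.SameCycle (f a) (f b) := by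
  obtain ⟨i, rfl⟩ := hab
  induction i with
  | zero => exact Perm.SameCycle.rfl
  | succ n ih =>
    refine ih.trans ?_
    have := h ((σ ^ (n : ℤ)) a)
    rwa [← Perm.mul_apply, ← zpow_one_add, add_comm] at this
  | pred n ih =>
    refine ih.trans ?_
    have := h ((σ ^ (-(n : ℤ) - 1)) a)
    rw [← Perm.mul_apply, ← zpow_one_add, add_sub_cancel] at this
    exact this.symm

theorem cycleCount_eq_card_quotient {V : Type*} [Fintype V] [DecidableEq V] (σ : Perm V) :
    cycleCount σ = Nat.card (Quotient (Perm.SameCycle.setoid σ)) := by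
  classical
  -- `g` labels a vertex by its cycle, or by itself when it is fixed.
  let g : V → Perm V ⊕ V := fun x => if σ x = x then Sum.inr x else Sum.inl (σ.cycleOf x)
  have hg : ∀ x y, σ.SameCycle x y ↔ g x = g y := by
    intro x y
    by_cases hx : σ x = x <;> by_cases hy : σ y = y <;> simp only [g, hx, hy, if_true, if_false]
    · rw [Sum.inr.injEq]
      exact ⟨fun h => h.eq_of_left hx, fun h => h ▸ Perm.SameCycle.rfl⟩
    · simp only [reduceCtorEq, iff_false]
      intro h
      exact hy (h.eq_of_left hx ▸ hx)
    · simp only [reduceCtorEq, iff_false]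
      intro h
      exact hx ((h.eq_of_right hy).symm ▸ hy)
    · rw [Sum.inl.injEq]
      exact Perm.sameCycle_iff_cycleOf_eq_of_mem_support (by simpa using hx) (by simpa using hy)
  have himg : Finset.univ.image g =
      σ.cycleFactorsFinset.disjSum (Finset.univ.filter fun x => σ x = x) := by
    ext z
    rcases z with c | x
    · simp only [Finset.mem_image, Finset.mem_univ, true_and, Finset.inl_mem_disjSum]
      constructor
      · rintro ⟨x, hx⟩
        by_cases h : σ x = x <;> simp only [g, h, if_true, if_false, reduceCtorEq, Sum.inl.injEq] at hx
        rw [← hx, Perm.cycleOf_mem_cycleFactorsFinset_iff]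
        simpa using h
      · intro hc
        obtain ⟨x, hx⟩ := (Perm.mem_cycleFactorsFinset_iff.1 hc).1.nonempty_support
        have h1 : c = σ.cycleOf x := Perm.cycle_is_cycleOf hx hc
        have h2 : σ x ≠ x := by
          have := Perm.mem_cycleFactorsFinset_support_le hc hx
          simpa using this
        exact ⟨x, by simp [g, h2, h1]⟩
    · simp only [Finset.mem_image, Finset.mem_univ, true_and, Finset.inr_mem_disjSum,
        Finset.mem_filter]
      constructor
      · rintro ⟨y, hy⟩
        by_cases h : σ y = y <;> simp only [g, h, if_true, if_false, reduceCtorEq, Sum.inr.injEq] at hy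
        exact hy ▸ h
      · intro h
        exact ⟨x, by simp [g, h]⟩
  have hker : Perm.SameCycle.setoid σ = Setoid.ker g := by
    ext x y
    exact hg x y
  rw [hker, Nat.card_congr (Setoid.quotientKerEquivRange g), ← Set.image_univ, ← Finset.coe_univ,
    ← Finset.coe_image, himg]
  simp only [Nat.card_eq_fintype_card, Finset.coe_sort_coe, Fintype.card_coe, Finset.card_disjSum]
  simp [cycleCount, Perm.cycleType_def]

/-- Two permutations have equally many cycles if there are maps in both directions that respect
the cycles and are mutually inverse up to moving along a cycle. -/
theorem cycleCount_of_sameCycle {V W : Type*} [Fintype V] [DecidableEq V] [Fintype W]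
    [DecidableEq W] {σ : Perm V} {τ : Perm W} (f : V → W) (g : W → V)
    (hf : ∀ z, τ.SameCycle (f z) (f (σ z))) (hg : ∀ z, σ.SameCycle (g z) (g (τ z)))
    (hgf : ∀ z, σ.SameCycle (g (f z)) z) (hfg : ∀ z, τ.SameCycle (f (g z)) z) :
    cycleCount σ = cycleCount τ := by
  rw [cycleCount_eq_card_quotient, cycleCount_eq_card_quotient]
  refine Nat.card_congr
    { toFun := Quotient.map f fun _ _ h => sameCycle_map f hf h
      invFun := Quotient.map g fun _ _ h => sameCycle_map g hg h
      left_inv := ?_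
      right_inv := ?_ }
  · rintro ⟨z⟩
    exact Quotient.sound (hgf z)
  · rintro ⟨z⟩
    exact Quotient.sound (hfg z)

theorem cycleCount_permCongr {V W : Type*} [Fintype V] [DecidableEq V] [Fintype W]
    [DecidableEq W] (e : V ≃ W) (σ : Perm V) : cycleCount (e.permCongr σ) = cycleCount σ := by
  refine cycleCount_of_sameCycle e.symm e (fun z => ?_) (fun z => ?_) (fun z => ?_) fun z => ?_
  · rw [Equiv.permCongr_apply, e.symm_apply_apply]
    exact ⟨1, by simp⟩
  · exact ⟨1, by simp⟩
  · rw [e.apply_symm_apply]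
  · rw [e.symm_apply_apply]

/-- Inserting a new element into a cycle, just before `x`, keeps the number of cycles. -/
theorem cycleCount_insert {V : Type*} [Fintype V] [DecidableEq V] (x : V) (τ : Perm V) :
    cycleCount (Perm.decomposeOption.symm (some x, τ)) = cycleCount τ := by
  have h0 : Perm.decomposeOption.symm (some x, τ) none = some x := by simp
  have h1 : ∀ u, τ u = x → Perm.decomposeOption.symm (some x, τ) (some u) = none := by
    intro u hu
    simp [hu]
  have h2 : ∀ u, τ u ≠ x → Perm.decomposeOption.symm (some x, τ) (some u) = some (τ u) := by
    intro u hu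
    simp [Equiv.swap_apply_of_ne_of_ne, hu]
  refine cycleCount_of_sameCycle (fun z => z.getD x) some (fun z => ?_) (fun u => ?_)
    (fun z => ?_) fun u => Perm.SameCycle.rfl
  · rcases z with _ | u
    · rw [h0]; exact Perm.SameCycle.rfl
    · by_cases hu : τ u = x
      · rw [h1 u hu]; exact ⟨1, by simpa using hu⟩
      · rw [h2 u hu]; exact ⟨1, by simp⟩
  · by_cases hu : τ u = x
    · refine ⟨2, ?_⟩
      rw [zpow_two, Perm.mul_apply, h1 u hu, h0, hu]
    · exact ⟨1, by rw [zpow_one, h2 u hu]⟩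
  · rcases z with _ | u
    · exact Perm.SameCycle.symm ⟨1, by rw [zpow_one, h0]; rfl⟩
    · exact Perm.SameCycle.rfl

/-- Adding a new fixed point adds one cycle. -/
theorem cycleCount_insert_none {V : Type*} [Fintype V] [DecidableEq V] (τ : Perm V) :
    cycleCount (Perm.decomposeOption.symm (none, τ)) = cycleCount τ + 1 := by
  have h0 : Perm.decomposeOption.symm (none, τ) none = none := by simp
  have h2 : ∀ u, Perm.decomposeOption.symm (none, τ) (some u) = some (τ u) := by
    intro u
    simp
  set σ := Perm.decomposeOption.symm (none, τ)
  rw [cycleCount_eq_card_quotient, cycleCount_eq_card_quotient, ← Finite.card_option]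
  -- The map to `Option` of the quotient of `τ` has the cycles of `σ` as fibres.
  let g : Option V → Option (Quotient (Perm.SameCycle.setoid τ)) :=
    Option.map (Quotient.mk (Perm.SameCycle.setoid τ))
  have hsurj : Function.Surjective g := by
    rintro (_ | ⟨⟨u⟩⟩)
    · exact ⟨none, rfl⟩
    · exact ⟨some u, rfl⟩
  have hg : ∀ z, g (σ z) = g z := by
    rintro (_ | u)
    · rw [h0]
    · rw [h2]
      refine congrArg some (Quotient.sound ?_)
      exact Perm.SameCycle.symm ⟨1, by simp⟩
  have hker : Perm.SameCycle.setoid σ = Setoid.ker g := by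
    ext x y
    constructor
    · rintro ⟨i, rfl⟩
      induction i with
      | zero => exact rfl
      | succ n ih =>
        refine ih.trans ?_
        have := hg ((σ ^ (n : ℤ)) x)
        rw [← Perm.mul_apply, ← zpow_one_add, add_comm] at this
        exact this.symm
      | pred n ih =>
        refine ih.trans ?_
        have := hg ((σ ^ (-(n : ℤ) - 1)) x)
        rwa [← Perm.mul_apply, ← zpow_one_add, add_sub_cancel] at this
    · intro h
      rcases x with _ | u <;> rcases y with _ | v
      · exact Perm.SameCycle.rfl
      · exact absurd h (by simp [g])
      · exact absurd h (by simp [g])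
      · have : τ.SameCycle u v := Quotient.exact (Option.some.inj h)
        exact sameCycle_map some (fun z => ⟨1, by rw [zpow_one, h2]⟩) this
  rw [hker]
  exact Nat.card_congr (Setoid.quotientKerEquivOfSurjective g hsurj)

/-! ### The `α`-permanent and the elimination of twins -/

section AlphaPermanent

variable {R : Type*} [CommRing R]

/-- The `α`-permanent with parameter `t`: the permanent of `A` in which every permutation is
weighted by `t` to the number of its cycles. -/
def alphaPerm {V : Type*} [Fintype V] [DecidableEq V] (t : R) (A : V → V → R) : R :=
  ∑ σ : Perm V, t ^ cycleCount σ * ∏ v, A v (σ v)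

theorem alphaPerm_reindex {V W : Type*} [Fintype V] [DecidableEq V] [Fintype W] [DecidableEq W]
    (e : V ≃ W) (t : R) (A : W → W → R) :
    alphaPerm t (fun u v => A (e u) (e v)) = alphaPerm t A := by
  unfold alphaPerm
  refine Fintype.sum_equiv e.permCongr _ _ fun σ => ?_
  rw [cycleCount_permCongr]
  congr 1
  exact Fintype.prod_equiv e _ _ fun v => by simp

theorem alphaPerm_map {S : Type*} [CommRing S] (f : R →+* S) {V : Type*} [Fintype V]
    [DecidableEq V] (t : R) (A : V → V → R) :
    f (alphaPerm t A) = alphaPerm (f t) fun u v => f (A u v) := by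
  simp [alphaPerm, map_sum, map_prod]

/-- Expansion along the vertex `none`: either it is a fixed point, or it is inserted into an edge
`u → τ u` of a permutation `τ` of the other vertices. -/
theorem alphaPerm_option {V : Type*} [Fintype V] [DecidableEq V] (t : R)
    (A : Option V → Option V → R) :
    alphaPerm t A = t * A none none * alphaPerm t (fun u v => A (some u) (some v)) +
      ∑ τ : Perm V, t ^ cycleCount τ * ∑ u, A (some u) none * A none (some (τ u)) *
        ∏ v ∈ Finset.univ.erase u, A (some v) (some (τ v)) := by
  have hsum : alphaPerm t A = ∑ τ : Perm V, ∑ x : Option V,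
      t ^ cycleCount (Perm.decomposeOption.symm (x, τ)) *
        ∏ z, A z (Perm.decomposeOption.symm (x, τ) z) := by
    rw [Finset.sum_comm, ← Fintype.sum_prod_type', alphaPerm]
    exact (Equiv.sum_comp Perm.decomposeOption.symm
      fun σ : Perm (Option V) => t ^ cycleCount σ * ∏ z, A z (σ z)).symm
  rw [hsum, alphaPerm, Finset.mul_sum, ← Finset.sum_add_distrib]
  refine Finset.sum_congr rfl fun τ _ => ?_
  rw [Fintype.sum_option]
  congr 1
  · rw [cycleCount_insert_none, Fintype.prod_option]
    simp only [Perm.decomposeOption_symm_of_none_apply, Option.map_none, Option.map_some]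
    ring
  · rw [← Equiv.sum_comp τ, Finset.mul_sum]
    refine Finset.sum_congr rfl fun u _ => ?_
    rw [cycleCount_insert, Fintype.prod_option, ← Finset.mul_prod_erase _ _ (Finset.mem_univ u)]
    have h0 : Perm.decomposeOption.symm (some (τ u), τ) none = some (τ u) := by simp
    have h1 : Perm.decomposeOption.symm (some (τ u), τ) (some u) = none := by simp
    have h2 : ∀ v ∈ Finset.univ.erase u,
        A (some v) (Perm.decomposeOption.symm (some (τ u), τ) (some v)) =
          A (some v) (some (τ v)) := by
      intro v hv
      have hne : τ v ≠ τ u := fun h => (Finset.ne_of_mem_erase hv) (τ.injective h)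
      simp [Equiv.swap_apply_of_ne_of_ne, hne]
    rw [h0, h1, Finset.prod_congr rfl h2]
    ring

/-- The matrix on `U ⊕ Fin m` obtained from `A` by attaching `m` mutually adjacent looped
twins, with in-weights `p` and out-weights `q`. -/
def attachTwins {U : Type*} (m : ℕ) (A : U → U → R) (p q : U → R) : U ⊕ Fin m → U ⊕ Fin m → R
  | Sum.inl u, Sum.inl v => A u v
  | Sum.inl u, Sum.inr _ => p u
  | Sum.inr _, Sum.inl v => q v
  | Sum.inr _, Sum.inr _ => 1

/-- The operator `F ↦ t w F + w² F'` on polynomials in `w`. -/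
noncomputable def twinOp (t : R) : R[X] →ₗ[R] R[X] :=
  LinearMap.mulLeft R (C t * X) + LinearMap.mulLeft R (X ^ 2) ∘ₗ derivative

theorem twinOp_apply (t : R) (F : R[X]) :
    twinOp t F = C t * X * F + X ^ 2 * derivative F := rfl

/-- The functional `L_m` sending `w ^ j` to the rising factorial `(t + j) ⋯ (t + j + m - 1)`. -/
noncomputable def twinFun (m : ℕ) (t : R) : R[X] →ₗ[R] R :=
  leval 1 ∘ₗ (twinOp t ^ m)

/-- The rising factorial `(t + j)(t + j + 1) ⋯ (t + j + m - 1)`. -/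
def rising (m j : ℕ) (t : R) : R := ∏ i ∈ Finset.range m, (t + j + i)

theorem twinOp_pow_X (t : R) (m j : ℕ) :
    (twinOp t ^ m) (X ^ j) = C (rising m j t) * X ^ (j + m) := by
  induction m with
  | zero => simp [rising]
  | succ m ih =>
    rw [pow_succ', Module.End.mul_apply, ih, twinOp_apply]
    have : rising (m + 1) j t = rising m j t * (t + j + m) := Finset.prod_range_succ _ _
    rw [this, derivative_C_mul, derivative_X_pow]
    rcases Nat.eq_zero_or_pos (j + m) with h | h
    · obtain ⟨rfl, rfl⟩ : j = 0 ∧ m = 0 := by omega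
      simp [rising]
    · obtain ⟨n, hn⟩ : ∃ n, j + m = n + 1 := ⟨j + m - 1, by omega⟩
      have hc : (C (j : R) + C (m : R) : R[X]) = C ((n : R) + 1) := by
        rw [← C_add]
        have := congrArg (Nat.cast (R := R)) hn
        push_cast at this
        rw [this]
      rw [← add_assoc, hn, C_mul, add_assoc, C_add, C_add, hc]
      simp
      ring

theorem twinFun_X_pow (m : ℕ) (t : R) (j : ℕ) : twinFun m t (X ^ j) = rising m j t := by
  rw [twinFun, LinearMap.comp_apply, twinOp_pow_X]
  simp [leval]

theorem twinFun_C_mul_X_pow (m : ℕ) (t a : R) (j : ℕ) :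
    twinFun m t (C a * X ^ j) = a * rising m j t := by
  rw [← smul_eq_C_mul, map_smul, twinFun_X_pow, smul_eq_mul]

/-- The matrix `A + (w - 1) p qᵀ` over the polynomials in `w`. The variable `w - 1` marks the
passages from `u` to `v` through at least one twin. -/
noncomputable def contracted {U : Type*} (A : U → U → R) (p q : U → R) : U → U → R[X] :=
  fun u v => C (A u v - p u * q v) + X * C (p u * q v)

/-- Attaching one twin amounts to applying `twinOp`. -/
theorem alphaPerm_contracted_option {U : Type*} [Fintype U] [DecidableEq U] (t : R)
    (A : Option U → Option U → R) (p q : Option U → R) (hp : p none = 1) (hq : q none = 1)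
    (h0 : A none none = 1) (h1 : ∀ u, A (some u) none = p (some u))
    (h2 : ∀ v, A none (some v) = q (some v)) :
    alphaPerm (C t) (contracted A p q) =
      twinOp t (alphaPerm (C t) (contracted (fun u v => A (some u) (some v))
        (fun u => p (some u)) (fun v => q (some v)))) := by
  rw [alphaPerm_option, twinOp_apply]
  refine congrArg₂ (· + ·) ?_ ?_
  · have : contracted A p q none none = X := by simp [contracted, hp, hq, h0]
    rw [this]
    rfl
  · rw [alphaPerm, derivative_sum, Finset.mul_sum]
    refine Finset.sum_congr rfl fun τ _ => ?_
    rw [← C_pow, derivative_C_mul, derivative_prod_finset]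
    rw [mul_left_comm, Finset.mul_sum (a := X ^ 2)]
    refine congrArg _ ?_
    refine Finset.sum_congr rfl fun u _ => ?_
    simp only [contracted, h1, h2, hp, hq, mul_one, one_mul, sub_self, C_0, zero_add,
      derivative_add, derivative_C, derivative_mul, derivative_X, mul_zero, add_zero]
    rw [C_mul]
    ring

/-- Elimination of a class of `m` twins. The induction generalizes `U`, because a twin is moved
from the class to `U`. -/
theorem alphaPerm_attach (m : ℕ) (t : R) : ∀ {U : Type} [Fintype U] [DecidableEq U]
    (A : U → U → R) (p q : U → R),
    alphaPerm t (attachTwins m A p q) = twinFun m t (alphaPerm (C t) (contracted A p q)) := by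
  induction m with
  | zero =>
    intro U _ _ A p q
    have h : twinFun 0 t (alphaPerm (C t) (contracted A p q)) = alphaPerm t A := by
      have := alphaPerm_map (evalRingHom (1 : R)) (C t) (contracted A p q)
      simpa [twinFun, leval, contracted] using this
    rw [h, ← alphaPerm_reindex (Equiv.sumEmpty U (Fin 0)).symm t (attachTwins 0 A p q)]
    rfl
  | succ m ih =>
    intro U _ _ A p q
    let e : Option U ⊕ Fin m ≃ U ⊕ Fin (m + 1) :=
      { toFun := fun z => match z with
          | Sum.inl none => Sum.inr 0
          | Sum.inl (some u) => Sum.inl u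
          | Sum.inr i => Sum.inr i.succ
        invFun := fun z => match z with
          | Sum.inl u => Sum.inl (some u)
          | Sum.inr i => Fin.cases (Sum.inl none) Sum.inr i
        left_inv := by rintro ((_ | u) | i) <;> rfl
        right_inv := by
          rintro (u | i)
          · rfl
          · refine Fin.cases ?_ (fun i => ?_) i <;> rfl }
    let A' : Option U → Option U → R := fun u v => attachTwins 1 A p q
      (u.elim (Sum.inr 0) Sum.inl) (v.elim (Sum.inr 0) Sum.inl)
    let p' : Option U → R := fun u => u.elim 1 p
    let q' : Option U → R := fun u => u.elim 1 q
    have hA : (fun u v => attachTwins (m + 1) A p q (e u) (e v)) = attachTwins m A' p' q' := by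
      funext u v
      rcases u with (_ | u) | i <;> rcases v with (_ | v) | j <;> rfl
    rw [← alphaPerm_reindex e t, hA, ih A' p' q',
      alphaPerm_contracted_option t A' p' q' rfl rfl rfl (fun _ => rfl) (fun _ => rfl)]
    rw [twinFun, twinFun, pow_succ]
    rfl

end AlphaPermanent

/-! ### The generating polynomial of `X_d` in block form -/

section Core

variable {R : Type*} [CommRing R]

theorem cycleCount_decomposeFin {n : ℕ} (i : Fin (n + 1)) (τ : Perm (Fin n)) :
    cycleCount (Perm.decomposeFin.symm (i, τ)) = cycleCount τ + if i = 0 then 1 else 0 := by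
  have h : Perm.decomposeFin.symm (i, τ) = (finSuccEquiv n).symm.permCongr
      (Perm.decomposeOption.symm (finSuccEquiv n i, τ)) := by
    rw [Perm.decomposeFin]
    rfl
  rw [h, cycleCount_permCongr]
  refine Fin.cases ?_ (fun i => ?_) i
  · rw [finSuccEquiv_zero, cycleCount_insert_none, if_pos rfl]
  · rw [finSuccEquiv_succ, cycleCount_insert, if_neg (Fin.succ_ne_zero i), add_zero]

/-- The `α`-permanent of a `4 × 4` matrix supported on the closed neighbourhoods of the
`4`-cycle `0, 1, 2, 3`. -/
theorem alphaPerm_four (t : R) (A : Fin 4 → Fin 4 → R) (h02 : A 0 2 = 0) (h20 : A 2 0 = 0)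
    (h13 : A 1 3 = 0) (h31 : A 3 1 = 0) :
    alphaPerm t A = t ^ 4 * (A 0 0 * A 1 1 * A 2 2 * A 3 3) +
      t ^ 3 * (A 0 1 * A 1 0 * A 2 2 * A 3 3 + A 1 2 * A 2 1 * A 0 0 * A 3 3 +
        A 2 3 * A 3 2 * A 0 0 * A 1 1 + A 3 0 * A 0 3 * A 1 1 * A 2 2) +
      t ^ 2 * (A 0 1 * A 1 0 * A 2 3 * A 3 2 + A 1 2 * A 2 1 * A 3 0 * A 0 3) +
      t * (A 0 1 * A 1 2 * A 2 3 * A 3 0 + A 1 0 * A 2 1 * A 3 2 * A 0 3) := by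
  have hu : cycleCount (1 : Perm (Fin 1)) = 1 := by decide
  have h2 : ∀ (i : Fin 4) (τ : Perm (Fin 3)),
      Perm.decomposeFin.symm (i, τ) 2 = swap 0 i (τ 1).succ :=
    fun i τ => Perm.decomposeFin_symm_apply_succ τ i 1
  unfold alphaPerm
  simp only [Finset.univ_perm_fin_succ, Finset.sum_map, ← Finset.univ_product_univ,
    Finset.sum_product, Equiv.coe_toEmbedding, cycleCount_decomposeFin, Fin.sum_univ_succ,
    Fin.prod_univ_succ, Finset.univ_unique, Finset.sum_singleton, Perm.default_eq]
  simp [Equiv.swap_apply_def, Fin.ext_iff, Perm.decomposeFin_symm_apply_succ, hu, h2, h02, h20,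
    h13, h31]
  ring

/-- The direct edges among the four singleton classes `0, 1, 3, 4` of `X_d`, numbered
`0, 1, 2, 3`. -/
def coreAdj : Fin 4 → Fin 4 → R :=
  ![![1, 1, 0, 0], ![1, 1, 0, 0], ![0, 0, 1, 1], ![0, 0, 1, 1]]

/-- The singleton classes adjacent to class `2`. -/
def nbrTwo : Fin 4 → R := ![0, 1, 1, 0]

/-- The singleton classes adjacent to class `5`. -/
def nbrFive : Fin 4 → R := ![1, 0, 0, 1]

/-- The adjacency matrix of `X_{m+2}` in block form. -/
def xMatrix (m : ℕ) : (Fin 4 ⊕ Fin m) ⊕ Fin m → (Fin 4 ⊕ Fin m) ⊕ Fin m → R :=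
  attachTwins m (attachTwins m coreAdj nbrFive nbrFive) (Sum.elim nbrTwo 0) (Sum.elim nbrTwo 0)

theorem rising_map {S : Type*} [CommRing S] (f : R →+* S) (m j : ℕ) (t : R) :
    rising m j (f t) = f (rising m j t) := by
  simp [rising, map_prod]

theorem twinFun_quadratic (m : ℕ) (t a b c : R) :
    twinFun m t (C a * X ^ 2 + C b * X ^ 1 + C c * X ^ 0) =
      a * rising m 2 t + b * rising m 1 t + c * rising m 0 t := by
  rw [map_add, map_add, twinFun_C_mul_X_pow, twinFun_C_mul_X_pow, twinFun_C_mul_X_pow]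

theorem twinFun_quadratic_mul_C (m : ℕ) (t a b c r : R) :
    twinFun m t ((C a * X ^ 2 + C b * X ^ 1 + C c * X ^ 0) * C r) =
      (a * rising m 2 t + b * rising m 1 t + c * rising m 0 t) * r := by
  rw [mul_comm, ← smul_eq_C_mul, map_smul, twinFun_quadratic, smul_eq_mul, mul_comm]

theorem alphaPerm_xMatrix (m : ℕ) (t : R) :
    alphaPerm t (xMatrix m) =
      t ^ 4 * rising m 2 t ^ 2 +
      t ^ 3 * (2 * rising m 1 t ^ 2 +
        2 * (rising m 2 t - 2 * rising m 1 t + rising m 0 t) * rising m 2 t) +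
      t ^ 2 * (rising m 0 t ^ 2 + (rising m 2 t - 2 * rising m 1 t + rising m 0 t) ^ 2) +
      2 * t * (rising m 1 t - rising m 0 t) ^ 2 := by
  -- Eliminating class `2` leaves a matrix in which class `5` is still a twin class.
  have h1 : contracted (attachTwins m coreAdj nbrFive nbrFive)
      (Sum.elim nbrTwo 0) (Sum.elim nbrTwo 0) =
      attachTwins m (contracted (R := R) coreAdj nbrTwo nbrTwo)
        (fun u => C (nbrFive u)) (fun u => C (nbrFive u)) := by
    funext u v
    rcases u with u | i <;> rcases v with v | j <;> simp [contracted, attachTwins]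
  -- The outer variable belongs to class `5`, the inner one to class `2`.
  have h2 : alphaPerm (C (C t)) (contracted (contracted (R := R) coreAdj nbrTwo nbrTwo)
      (fun u => C (nbrFive u)) (fun u => C (nbrFive u))) =
      C (C (t ^ 4 + 2 * t ^ 3 + t ^ 2) * X ^ 2 + C (-2 * t ^ 3 - 2 * t ^ 2) * X ^ 1 +
          C (t ^ 3 + t ^ 2) * X ^ 0) * X ^ 2 +
      C (C (-2 * t ^ 3 - 2 * t ^ 2) * X ^ 2 + C (2 * t ^ 3 + 4 * t ^ 2 + 2 * t) * X ^ 1 +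
          C (-2 * t ^ 2 - 2 * t) * X ^ 0) * X ^ 1 +
      C (C (t ^ 3 + t ^ 2) * X ^ 2 + C (-2 * t ^ 2 - 2 * t) * X ^ 1 +
          C (2 * t ^ 2 + 2 * t) * X ^ 0) * X ^ 0 := by
    rw [alphaPerm_four]
    · have hR (n : ℕ) [n.AtLeastTwo] : C (ofNat(n) : R) = ofNat(n) := map_ofNat C n
      have hRX (n : ℕ) [n.AtLeastTwo] : C (ofNat(n) : R[X]) = ofNat(n) := map_ofNat C n
      simp [contracted, coreAdj, nbrTwo, nbrFive, hR, hRX]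
      ring
    all_goals simp [contracted, coreAdj, nbrTwo, nbrFive]
  rw [xMatrix, alphaPerm_attach, h1, alphaPerm_attach, h2]
  rw [twinFun_quadratic, rising_map, rising_map, rising_map, map_add, map_add,
    twinFun_quadratic_mul_C, twinFun_quadratic_mul_C, twinFun_quadratic_mul_C]
  ring

end Core

/-! ### The digraphs `X_d` and `G_{k,d}` -/

section Graphs

variable {R : Type*} [CommRing R]

/-- The `0`-`1` adjacency matrix of a digraph. -/
def adj {V : Type*} (G : V → V → Prop) [DecidableRel G] : V → V → R :=
  fun u v => if G u v then 1 else 0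

theorem alphaPerm_adj {V : Type*} [Fintype V] [DecidableEq V] (G : V → V → Prop)
    [DecidableRel G] (t : R) :
    alphaPerm t (adj G) = ∑ σ ∈ cycleFactors G, t ^ cycleCount σ := by
  rw [cycleFactors, Finset.sum_filter, alphaPerm]
  refine Finset.sum_congr rfl fun σ _ => ?_
  simp only [adj, Finset.prod_ite_zero, Finset.mem_univ, true_implies, Finset.prod_const_one]
  split_ifs <;> simp

theorem sum_zmod_six {M : Type*} [AddCommMonoid M] (f : ZMod 6 → M) :
    ∑ i, f i = f 0 + f 1 + f 2 + f 3 + f 4 + f 5 :=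
  Fin.sum_univ_six f

theorem XdSize_eq (d : ℕ) : XdSize d 0 = 1 ∧ XdSize d 1 = 1 ∧ XdSize d 2 = d - 2 ∧
    XdSize d 3 = 1 ∧ XdSize d 4 = 1 ∧ XdSize d 5 = d - 2 :=
  ⟨rfl, rfl, rfl, rfl, rfl, rfl⟩

theorem card_XdVert (m : ℕ) : Fintype.card (XdVert (m + 2)) = 2 * m + 4 := by
  obtain ⟨h0, h1, h2, h3, h4, h5⟩ := XdSize_eq (m + 2)
  rw [Fintype.card_sigma]
  simp only [Fintype.card_fin, sum_zmod_six, h0, h1, h2, h3, h4, h5]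
  omega

theorem isRegular_Xd {d : ℕ} (hd : 3 ≤ d) : IsRegularDigraph (XdRel d) d := by
  obtain ⟨h0, h1, h2, h3, h4, h5⟩ := XdSize_eq d
  have hcard : ∀ (P : ZMod 6 → Prop) [DecidablePred P],
      (Finset.univ.filter fun w : XdVert d => P w.1).card =
        ∑ i, if P i then XdSize d i else 0 := by
    intro P _
    rw [Finset.card_filter, Fintype.sum_sigma]
    refine Finset.sum_congr rfl fun i _ => ?_
    split_ifs <;> simp
  rintro ⟨i, x⟩
  constructor
  · rw [show (Finset.univ.filter fun w => XdRel d ⟨i, x⟩ w) = Finset.univ.filter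
      fun w : XdVert d => w.1 - i = -1 ∨ w.1 - i = 0 ∨ w.1 - i = 1 from rfl,
      hcard fun j => j - i = -1 ∨ j - i = 0 ∨ j - i = 1, sum_zmod_six, h0, h1, h2, h3, h4, h5]
    clear x hcard h0 h1 h2 h3 h4 h5
    revert i
    change ∀ i : Fin 6, _
    intro i
    fin_cases i <;> simp +decide <;> omega
  · rw [show (Finset.univ.filter fun w => XdRel d w ⟨i, x⟩) = Finset.univ.filter
      fun w : XdVert d => i - w.1 = -1 ∨ i - w.1 = 0 ∨ i - w.1 = 1 from rfl,
      hcard fun j => i - j = -1 ∨ i - j = 0 ∨ i - j = 1, sum_zmod_six, h0, h1, h2, h3, h4, h5]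
    clear x hcard h0 h1 h2 h3 h4 h5
    revert i
    change ∀ i : Fin 6, _
    intro i
    fin_cases i <;> simp +decide <;> omega

theorem isRegular_Gkd {d : ℕ} (k : ℕ) (hd : 3 ≤ d) : IsRegularDigraph (GkdRel k d) d := by
  have hX := isRegular_Xd hd
  have hlr : ∀ u a, ¬GkdRel k d (Sum.inl u) (Sum.inr a) := fun _ _ h => h
  have hrl : ∀ u a, ¬GkdRel k d (Sum.inr a) (Sum.inl u) := fun _ _ h => h
  simp only [IsRegularDigraph, Finset.card_filter] at hX ⊢
  rintro (u | ⟨i, x⟩)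
  · simp only [Fintype.sum_sum_type, hlr, hrl, if_false, Finset.sum_const_zero, add_zero]
    exact hX u
  · have h1 : (∑ j : Fin (k - 2), ∑ _y : Fin d, if i = j then 1 else 0) = d := by simp
    have h2 : (∑ j : Fin (k - 2), ∑ _y : Fin d, if j = i then 1 else 0) = d := by simp
    simp only [Fintype.sum_sum_type, hlr, hrl, if_false, Finset.sum_const_zero, zero_add,
      Fintype.sum_prod_type]
    exact ⟨h1, h2⟩

/-- The class in `X_{m+2}` of a vertex given in block form. -/
def blockClass (m : ℕ) : (Fin 4 ⊕ Fin m) ⊕ Fin m → ZMod 6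
  | Sum.inl (Sum.inl i) => (![0, 1, 3, 4] : Fin 4 → ZMod 6) i
  | Sum.inl (Sum.inr _) => 5
  | Sum.inr _ => 2

/-- The block form of the vertex set of `X_{m+2}`. -/
def blockVertex (m : ℕ) : (Fin 4 ⊕ Fin m) ⊕ Fin m → XdVert (m + 2)
  | Sum.inl (Sum.inl 0) => ⟨0, (0 : Fin 1)⟩
  | Sum.inl (Sum.inl 1) => ⟨1, (0 : Fin 1)⟩
  | Sum.inl (Sum.inl 2) => ⟨3, (0 : Fin 1)⟩
  | Sum.inl (Sum.inl 3) => ⟨4, (0 : Fin 1)⟩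
  | Sum.inl (Sum.inr i) => ⟨5, (i : Fin m)⟩
  | Sum.inr i => ⟨2, (i : Fin m)⟩

theorem blockVertex_fst (m : ℕ) (z) : (blockVertex m z).1 = blockClass m z := by
  rcases z with (i | i) | i
  · fin_cases i <;> rfl
  · rfl
  · rfl

theorem blockVertex_injective (m : ℕ) : Function.Injective (blockVertex m) := by
  intro a b hab
  have h1 : blockClass m a = blockClass m b := by
    rw [← blockVertex_fst, ← blockVertex_fst, hab]
  have h2 : ((blockVertex m a).2 : ℕ) = (blockVertex m b).2 := by rw [hab]
  rcases a with (i | i) | i <;> rcases b with (j | j) | j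
  · have hinj : ∀ i j : Fin 4, (![0, 1, 3, 4] : Fin 4 → ZMod 6) i =
        (![0, 1, 3, 4] : Fin 4 → ZMod 6) j → i = j := by decide
    rw [hinj i j h1]
  · have : ∀ i : Fin 4, (![0, 1, 3, 4] : Fin 4 → ZMod 6) i ≠ 5 := by decide
    exact absurd h1 (this i)
  · have : ∀ i : Fin 4, (![0, 1, 3, 4] : Fin 4 → ZMod 6) i ≠ 2 := by decide
    exact absurd h1 (this i)
  · have : ∀ i : Fin 4, 5 ≠ (![0, 1, 3, 4] : Fin 4 → ZMod 6) i := by decide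
    exact absurd h1 (this j)
  · rw [Fin.ext (show (i : ℕ) = j from h2)]
  · exact absurd h1 (show (5 : ZMod 6) ≠ 2 by decide)
  · have : ∀ i : Fin 4, 2 ≠ (![0, 1, 3, 4] : Fin 4 → ZMod 6) i := by decide
    exact absurd h1 (this j)
  · exact absurd h1 (show (2 : ZMod 6) ≠ 5 by decide)
  · rw [Fin.ext (show (i : ℕ) = j from h2)]

theorem alphaPerm_Xd (m : ℕ) (t : R) :
    alphaPerm t (adj (XdRel (m + 2))) = alphaPerm t (xMatrix (R := R) m) := by
  have hbij : Function.Bijective (blockVertex m) :=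
    (Fintype.bijective_iff_injective_and_card _).2 ⟨blockVertex_injective m, by
      rw [card_XdVert]
      simp
      omega⟩
  rw [← alphaPerm_reindex (Equiv.ofBijective _ hbij)]
  congr 1
  funext u v
  have h : adj (R := R) (XdRel (m + 2)) (blockVertex m u) (blockVertex m v) =
      if blockClass m v - blockClass m u = -1 ∨ blockClass m v - blockClass m u = 0 ∨
        blockClass m v - blockClass m u = 1 then 1 else 0 := by
    rw [← blockVertex_fst, ← blockVertex_fst]
    rfl
  rw [Equiv.ofBijective_apply, Equiv.ofBijective_apply, h]
  rcases u with (i | i) | i <;> rcases v with (j | j) | j <;> try fin_cases i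
  all_goals try fin_cases j
  all_goals simp +decide [blockClass, xMatrix, attachTwins, coreAdj, nbrTwo, nbrFive]

/-- Each copy of `K_d°` is a class of `d` twins without neighbours outside, hence a factor
`t (t + 1) ⋯ (t + d - 1)`. -/
theorem alphaPerm_Gkd (n d : ℕ) (t : R) :
    alphaPerm t (adj (sumRel (XdRel d) fun a b : Fin n × Fin d => a.1 = b.1)) =
      alphaPerm t (adj (XdRel d)) * rising d 0 t ^ n := by
  induction n with
  | zero =>
    rw [← alphaPerm_reindex (Equiv.sumEmpty (XdVert d) (Fin 0 × Fin d)).symm, pow_zero, mul_one]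
    rfl
  | succ n ih =>
    let e : (XdVert d ⊕ (Fin n × Fin d)) ⊕ Fin d ≃ XdVert d ⊕ (Fin (n + 1) × Fin d) :=
      { toFun := fun z => match z with
          | Sum.inl (Sum.inl u) => Sum.inl u
          | Sum.inl (Sum.inr a) => Sum.inr (a.1.succ, a.2)
          | Sum.inr i => Sum.inr (0, i)
        invFun := fun z => match z with
          | Sum.inl u => Sum.inl (Sum.inl u)
          | Sum.inr a => Fin.cases (Sum.inr a.2) (fun i => Sum.inl (Sum.inr (i, a.2))) a.1
        left_inv := by rintro ((u | a) | i) <;> rfl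
        right_inv := by
          rintro (u | ⟨i, x⟩)
          · rfl
          · refine Fin.cases ?_ (fun i => ?_) i <;> rfl }
    have hA : (fun u v => adj (R := R)
        (sumRel (XdRel d) fun a b : Fin (n + 1) × Fin d => a.1 = b.1) (e u) (e v)) =
        attachTwins d (adj (sumRel (XdRel d) fun a b : Fin n × Fin d => a.1 = b.1)) 0 0 := by
      funext u v
      rcases u with (u | a) | i <;> rcases v with (v | b) | j <;>
        simp [e, adj, sumRel, attachTwins, Fin.succ_ne_zero, (Fin.succ_ne_zero _).symm] <;>
        congr
    have hC : contracted (adj (R := R) (sumRel (XdRel d) fun a b : Fin n × Fin d => a.1 = b.1))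
        0 0 = fun u v => C (adj (sumRel (XdRel d) fun a b : Fin n × Fin d => a.1 = b.1) u v) := by
      funext u v
      simp [contracted]
    rw [← alphaPerm_reindex e, hA, alphaPerm_attach, hC, ← alphaPerm_map, ih,
      ← mul_one (C _), ← pow_zero X, twinFun_C_mul_X_pow, pow_succ, mul_assoc]

end Graphs

/-! ### Values and derivatives at `t = 1` -/

section Derivative

theorem rising_shift {R : Type*} [CommRing R] (m j : ℕ) (t : R) :
    rising m j t * (t + j + m) = (t + j) * rising m (j + 1) t := by
  unfold rising
  rw [← Finset.prod_range_succ, Finset.prod_range_succ']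
  rw [mul_comm]
  congr 1
  · simp
  · refine Finset.prod_congr rfl fun i _ => ?_
    push_cast
    ring

theorem rising_zero_one_pos (m : ℕ) : 0 < (rising m 0 (X : ℚ[X])).eval 1 := by
  rw [rising, eval_prod]
  refine Finset.prod_pos fun i _ => ?_
  simp
  positivity

theorem derivative_rising_zero (m : ℕ) :
    (derivative (rising m 0 (X : ℚ[X]))).eval 1 =
      (rising m 0 (X : ℚ[X])).eval 1 * harm m := by
  induction m with
  | zero => simp [rising, harm]
  | succ m ih =>
    have h1 : rising (m + 1) 0 (X : ℚ[X]) = rising m 0 X * (X + (m : ℚ[X])) := by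
      rw [rising, Finset.prod_range_succ, ← rising]
      simp
    have h2 : harm (m + 1) = harm m + 1 / (m + 1) := Finset.sum_range_succ _ _
    have h3 : (m : ℚ) + 1 ≠ 0 := by positivity
    rw [h1, h2, derivative_mul, eval_add, eval_mul, eval_mul, ih]
    simp
    field_simp
    ring

end Derivative

/-- The inequality `E[c] > 2 H_{m+2}` for `X_{m+2}`. Here `p_j` and `q_j` are the value and the
derivative at `1` of the rising factorials, and `h = H_m`; the terms in `h` cancel and the
difference of the two sides is
`p₀² (6 m⁴ + 8 m³ + 10 m² + 16 m) / ((m + 1) (m + 2))`. -/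
theorem core_inequality (m h p0 p1 p2 q0 q1 q2 : ℚ) (hm : 0 < m) (hp0 : 0 < p0)
    (hp1 : p0 * (m + 1) = p1) (hp2 : p1 * (m + 2) = 2 * p2) (hq0 : q0 = p0 * h)
    (hq1 : q0 * (m + 1) + p0 = p1 + q1) (hq2 : q1 * (m + 2) + p1 = p2 + 2 * q2) :
    2 * (h + 1 / (m + 1) + 1 / (m + 2)) * (p2 ^ 2 + (2 * p1 ^ 2 + 2 * (p2 - 2 * p1 + p0) * p2) +
        (p0 ^ 2 + (p2 - 2 * p1 + p0) ^ 2) + 2 * (p1 - p0) ^ 2) <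
      4 * p2 ^ 2 + 2 * p2 * q2 +
      3 * (2 * p1 ^ 2 + 2 * (p2 - 2 * p1 + p0) * p2) +
      (4 * p1 * q1 + 2 * (q2 - 2 * q1 + q0) * p2 + 2 * (p2 - 2 * p1 + p0) * q2) +
      2 * (p0 ^ 2 + (p2 - 2 * p1 + p0) ^ 2) +
      (2 * p0 * q0 + 2 * (p2 - 2 * p1 + p0) * (q2 - 2 * q1 + q0)) +
      2 * (p1 - p0) ^ 2 + 4 * (p1 - p0) * (q1 - q0) := by
  obtain rfl : p1 = p0 * (m + 1) := hp1.symm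
  obtain rfl : p2 = p0 * (m + 1) * (m + 2) / 2 := by linarith
  obtain rfl : q1 = q0 * (m + 1) + p0 - p0 * (m + 1) := by linarith
  obtain rfl : q2 = ((q0 * (m + 1) + p0 - p0 * (m + 1)) * (m + 2) + p0 * (m + 1) -
    p0 * (m + 1) * (m + 2) / 2) / 2 := by linarith
  subst hq0
  rw [← sub_pos]
  have hpos : 0 < p0 ^ 2 * (6 * m ^ 4 + 8 * m ^ 3 + 10 * m ^ 2 + 16 * m) /
      ((m + 1) * (m + 2)) := by positivity
  convert hpos using 1
  field_simp
  ring

theorem Xd_inequality (m : ℕ) (hm : 0 < m) :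
    2 * harm (m + 2) * (alphaPerm (X : ℚ[X]) (xMatrix m)).eval 1 <
      (derivative (alphaPerm (X : ℚ[X]) (xMatrix m))).eval 1 := by
  have e0 := rising_shift m 0 (X : ℚ[X])
  have e1 := rising_shift m 1 (X : ℚ[X])
  have hh : harm (m + 2) = harm m + 1 / ((m : ℚ) + 1) + 1 / ((m : ℚ) + 2) := by
    rw [harm, Finset.sum_range_succ, Finset.sum_range_succ, ← harm]
    push_cast
    ring
  have hp := rising_zero_one_pos m
  have hd := derivative_rising_zero m
  rw [alphaPerm_xMatrix, hh]
  generalize rising m 0 (X : ℚ[X]) = r0 at *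
  generalize rising m 1 (X : ℚ[X]) = r1 at *
  generalize rising m 2 (X : ℚ[X]) = r2 at *
  have v0 := congrArg (eval 1) e0
  have v1 := congrArg (eval 1) e1
  have w0 := congrArg (fun F => eval 1 (derivative F)) e0
  have w1 := congrArg (fun F => eval 1 (derivative F)) e1
  simp at v0 v1 w0 w1
  have key := core_inequality m (harm m) (eval 1 r0) (eval 1 r1) (eval 1 r2)
    (eval 1 (derivative r0)) (eval 1 (derivative r1)) (eval 1 (derivative r2))
    (by exact_mod_cast hm) hp (by linarith) (by linarith) hd (by linarith) (by linarith)
  convert key using 1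
  · simp
  · simp [derivative_pow]
    ring

theorem stmt_15 (d k : ℕ) (hd : 3 ≤ d) (hk : 2 ≤ k) :
    Fintype.card (GkdVert k d) = k * d ∧ IsRegularDigraph (GkdRel k d) d ∧
      (cycleFactors (GkdRel k d)).Nonempty ∧
      (k : ℚ) * harm d * ((cycleFactors (GkdRel k d)).card : ℚ) <
        ∑ σ ∈ cycleFactors (GkdRel k d), (cycleCount σ : ℚ) := by
  obtain ⟨m, rfl⟩ : ∃ m, d = m + 2 := ⟨d - 2, by omega⟩
  obtain ⟨n, rfl⟩ : ∃ n, k = n + 2 := ⟨k - 2, by omega⟩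
  refine ⟨?_, isRegular_Gkd _ hd, ⟨1, ?_⟩, ?_⟩
  · rw [Fintype.card_sum, card_XdVert, Fintype.card_prod, Fintype.card_fin, Fintype.card_fin,
      Nat.add_sub_cancel]
    ring
  · simp only [cycleFactors, Finset.mem_filter, Finset.mem_univ, true_and]
    rintro (u | a)
    · exact Or.inr (Or.inl (sub_self _))
    · exact rfl
  · -- The generating polynomial of the cycle counts.
    have hZ : ∑ σ ∈ cycleFactors (GkdRel (n + 2) (m + 2)), (X : ℚ[X]) ^ cycleCount σ =
        alphaPerm X (xMatrix m) * rising (m + 2) 0 X ^ n := by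
      rw [← alphaPerm_adj, ← alphaPerm_Xd, ← alphaPerm_Gkd n]
      rfl
    have hN := congrArg (eval 1) hZ
    have hS := congrArg (fun F => eval 1 (derivative F)) hZ
    have hr := rising_zero_one_pos (m + 2)
    have hd := derivative_rising_zero (m + 2)
    have hX := Xd_inequality m (by omega)
    simp [eval_finsetSum, derivative_pow] at hN hS
    rw [hN, hS, hd]
    generalize rising (m + 2) 0 (X : ℚ[X]) = r at *
    have hrn : 0 < eval 1 r ^ n := by positivity
    have hn : (n : ℚ) * eval 1 r ^ (n - 1) * (eval 1 r * harm (m + 2)) =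
        n * eval 1 r ^ n * harm (m + 2) := by
      rcases n with _ | n
      · simp
      · rw [Nat.add_sub_cancel, pow_succ]
        ring
    rw [hn]
    have := mul_lt_mul_of_pos_right hX hrn
    push_cast
    linarith
end
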